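/- arXiv:2407.13253 — 9 statements merged into one kernel-verified Lean document; each statement's English description precedes it below -/
import Mathlib

section
/- Let H be a real Hilbert space, a : H × H → ℝ a bilinear form, and C_con > 0 a constant with |a(w, v)| ≤ C_con‖w‖‖v‖ for all w, v ∈ H. Let V_h be a nonzero finite-dimensional subspace of H and β₀ > 0 a constant such that for every w_h ∈ V_h and every t < β₀‖w_h‖ there exists v_h ∈ V_h with ‖v_h‖ ≤ 1 and t ≤ a(w_h, v_h) (discrete inf-sup condition). Suppose u ∈ H and u_h ∈ V_h satisfy the Galerkin orthogonality a(u − u_h, v_h) = 0 for all v_h ∈ V_h. Then ‖u − u_h‖ ≤ (C_con/β₀) · inf_{v ∈ V_h} ‖u − v‖, with no extra additive factor 1. -/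
/-- sharp best-approximation property of the Galerkin method for a
bounded bilinear form satisfying a discrete inf-sup condition. -/
theorem galerkin_best_approximation
    {H : Type*} [NormedAddCommGroup H] [InnerProductSpace ℝ H] [CompleteSpace H]
    (a : H →ₗ[ℝ] H →ₗ[ℝ] ℝ) (C_con : ℝ) (hC : 0 < C_con)
    (hcont : ∀ w v : H, |a w v| ≤ C_con * ‖w‖ * ‖v‖)
    (Vh : Submodule ℝ H) [FiniteDimensional ℝ Vh] (hVh : Vh ≠ ⊥)
    (β₀ : ℝ) (hβ₀ : 0 < β₀)
    (hinfsup : ∀ wh ∈ Vh, ∀ t : ℝ, t < β₀ * ‖wh‖ →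
      ∃ vh ∈ Vh, ‖vh‖ ≤ 1 ∧ t ≤ a wh vh)
    (u uh : H) (huh : uh ∈ Vh)
    (hGal : ∀ vh ∈ Vh, a (u - uh) vh = 0) :
    ‖u - uh‖ ≤ (C_con / β₀) * ⨅ v : Vh, ‖u - (v : H)‖ := by
  obtain ⟨p, hp, hpinf⟩ := Submodule.exists_norm_eq_iInf_of_complete_subspace Vh
    (Submodule.complete_of_finiteDimensional Vh) u
  have horth := (Submodule.norm_eq_iInf_iff_real_inner_eq_zero Vh hp).1 hpinf
  change ‖u - p‖ = ⨅ v : Vh, ‖u - (v : H)‖ at hpinf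
  rw [← hpinf]
  have key : ∀ (s : ℝ), ∀ y ∈ Vh,
      β₀ * ‖s • (uh - p) + y‖ ≤ C_con * ‖s • (u - p) + y‖ := by
    intro s y hy
    refine le_of_forall_lt fun t ht => ?_
    obtain ⟨t', htt', ht'⟩ := exists_between ht
    obtain ⟨v, hv, hv1, htv⟩ := hinfsup _
      (Vh.add_mem (Vh.smul_mem s (Vh.sub_mem huh hp)) hy) t' ht'
    have h1 : a (s • (uh - p) + y) v = a (s • (u - p) + y) v := by
      have h2 := hGal v hv
      simp only [map_sub, map_add, map_smul, LinearMap.sub_apply, LinearMap.add_apply,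
        LinearMap.smul_apply, smul_eq_mul] at h2 ⊢
      linear_combination (-s) * h2
    have h3 := (le_abs_self _).trans (hcont (s • (u - p) + y) v)
    have h4 : C_con * ‖s • (u - p) + y‖ * ‖v‖ ≤ C_con * ‖s • (u - p) + y‖ :=
      mul_le_of_le_one_right (by positivity) hv1
    linarith
  have hw : uh - p ∈ Vh := Vh.sub_mem huh hp
  have hinner := horth _ hw
  have hsplit : u - uh = (u - p) - (uh - p) := by abel
  rw [hsplit]
  generalize uh - p = w at *
  generalize u - p = d at *
  rw [div_mul_eq_mul_div, le_div_iff₀ hβ₀]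
  by_cases hw0 : w = 0
  · subst hw0
    obtain ⟨y, hy, hy0⟩ := Submodule.exists_mem_ne_zero_of_ne_bot hVh
    have h := key 0 y hy
    simp only [zero_smul, zero_add] at h
    have hle := le_of_mul_le_mul_right h (norm_pos_iff.2 hy0)
    rw [sub_zero, mul_comm]
    gcongr
  · have hW : 0 < ‖w‖ := norm_pos_iff.2 hw0
    have h := key (‖w‖ ^ 2) ((‖d‖ ^ 2) • w) (Vh.smul_mem _ hw)
    rw [← add_smul, norm_smul, Real.norm_of_nonneg (by positivity)] at h
    have hsq := pow_le_pow_left₀ (by positivity) h 2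
    have e1 : ‖‖w‖ ^ 2 • d + ‖d‖ ^ 2 • w‖ ^ 2
        = ‖w‖ ^ 2 * ‖d‖ ^ 2 * (‖w‖ ^ 2 + ‖d‖ ^ 2) := by
      rw [norm_add_sq_real, inner_smul_left, inner_smul_right, hinner, norm_smul, norm_smul,
        Real.norm_of_nonneg (by positivity), Real.norm_of_nonneg (by positivity)]
      ring
    have e2 : ‖d - w‖ ^ 2 = ‖w‖ ^ 2 + ‖d‖ ^ 2 := by
      rw [norm_sub_sq_real, hinner]; ring
    rw [mul_pow C_con, e1] at hsq
    refine (sq_le_sq₀ (by positivity) (by positivity)).1 ?_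
    rw [mul_pow, mul_pow, e2]
    have hpos : 0 < ‖w‖ ^ 2 * (‖w‖ ^ 2 + ‖d‖ ^ 2) := by positivity
    refine le_of_mul_le_mul_right ?_ hpos
    linarith
end

section
/- In the abstract monotone Galerkin framework, let f ∈ H and let V_h ⊆ H be a closed subspace. Suppose u ∈ H satisfies a u v = ⟪f, v⟫ for all v ∈ H, and u_h ∈ V_h satisfies a u_h v = ⟪f, v⟫ for all v ∈ V_h. Then: (1) ‖u‖ ≤ ‖f‖ and ‖u_h‖ ≤ ‖f‖; and (2) for every v ∈ V_h, ‖u − u_h‖ ≤ L₀(1 + 2‖f‖²) ‖u − v‖; in particular ‖u − u_h‖ ≤ L₀(1 + 2‖f‖²) inf_{v ∈ V_h} ‖u − v‖. -/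
open RealInnerProductSpace

/-- stability and quasi-best-approximation a priori estimate for
the Galerkin method in the abstract monotone framework. -/
theorem monotone_galerkin_apriori
    {H : Type*} [NormedAddCommGroup H] [InnerProductSpace ℝ H] [CompleteSpace H]
    (a : H → H →L[ℝ] ℝ) (L₀ : ℝ) (hL₀ : 0 < L₀)
    (hmono : ∀ w v : H, ‖w - v‖ ^ 2 ≤ a w (w - v) - a v (w - v))
    (hlip : ∀ z w v : H,
      |a z v - a w v| ≤ L₀ * (1 + ‖z‖ ^ 2 + ‖w‖ ^ 2) * ‖z - w‖ * ‖v‖)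
    (hzero : ∀ v : H, a 0 v = 0)
    (f : H) (Vh : Submodule ℝ H) (hVh : IsClosed (Vh : Set H))
    (u : H) (hu : ∀ v : H, a u v = ⟪f, v⟫)
    (uh : H) (huh : uh ∈ Vh) (huh' : ∀ v ∈ Vh, a uh v = ⟪f, v⟫) :
    ‖u‖ ≤ ‖f‖ ∧ ‖uh‖ ≤ ‖f‖ ∧
      (∀ v ∈ Vh, ‖u - uh‖ ≤ L₀ * (1 + 2 * ‖f‖ ^ 2) * ‖u - v‖) ∧
      ‖u - uh‖ ≤ L₀ * (1 + 2 * ‖f‖ ^ 2) * ⨅ v : Vh, ‖u - (v : H)‖ := by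
  have stab : ∀ w : H, a w w = ⟪f, w⟫ → ‖w‖ ≤ ‖f‖ := by
    intro w hw
    have h1 := hmono w 0
    rw [sub_zero, hzero, hw, sub_zero] at h1
    have h2 := real_inner_le_norm f w
    by_contra hc
    have hc' : ‖f‖ < ‖w‖ := not_le.mp hc
    have h3 := norm_nonneg f
    nlinarith
  have h1 := stab u (hu u)
  have h2 := stab uh (huh' uh huh)
  have h3 : ∀ v ∈ Vh, ‖u - uh‖ ≤ L₀ * (1 + 2 * ‖f‖ ^ 2) * ‖u - v‖ := by
    intro v hv
    have hm := hmono u uh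
    have hd : u - uh = (u - v) + (v - uh) := by abel
    have horth : a u (u - uh) - a uh (u - uh) = a u (u - v) - a uh (u - v) := by
      rw [hd, map_add, map_add, hu (v - uh), huh' (v - uh) (Vh.sub_mem hv huh)]
      ring
    have hl := (le_abs_self _).trans (hlip u uh (u - v))
    have hb : L₀ * (1 + ‖u‖ ^ 2 + ‖uh‖ ^ 2) * ‖u - uh‖ * ‖u - v‖
        ≤ L₀ * (1 + ‖f‖ ^ 2 + ‖f‖ ^ 2) * ‖u - uh‖ * ‖u - v‖ := by gcongr
    have hk : ‖u - uh‖ * ‖u - uh‖ ≤ ‖u - uh‖ * (L₀ * (1 + 2 * ‖f‖ ^ 2) * ‖u - v‖) := by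
      rw [horth] at hm
      linarith
    rcases (norm_nonneg (u - uh)).eq_or_lt with h0 | h0
    · rw [← h0]; positivity
    · exact le_of_mul_le_mul_left hk h0
  refine ⟨h1, h2, h3, ?_⟩
  rw [Real.mul_iInf_of_nonneg (by positivity)]
  exact le_ciInf fun v => h3 v v.2
end

section
/- In the abstract first-order-system framework with monotone nonlinearity and exact solution pair (u, σ), for every τ ∈ W and v ∈ V one has ‖u − v‖ + ‖E σ − E τ‖ ≤ 3 η(τ, v). In particular this reliability bound is independent of the data f and of the nonlinearity N. -/
open RealInnerProductSpace

/-- f-independent reliability bound of the nonlinear least-squares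
functional estimator. -/
theorem nls_reliability_f_independent
    {V W Y Z : Type*}
    [NormedAddCommGroup V] [InnerProductSpace ℝ V] [CompleteSpace V]
    [NormedAddCommGroup W] [InnerProductSpace ℝ W] [CompleteSpace W]
    [NormedAddCommGroup Y] [InnerProductSpace ℝ Y] [CompleteSpace Y]
    [NormedAddCommGroup Z] [InnerProductSpace ℝ Z] [CompleteSpace Z]
    (G : V →L[ℝ] Y) (ι : V →L[ℝ] Z) (E : W →L[ℝ] Y) (D : W →L[ℝ] Z)
    (hV : ∀ v : V, ‖v‖ ^ 2 = ‖G v‖ ^ 2 + ‖ι v‖ ^ 2)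
    (hW : ∀ τ : W, ‖τ‖ ^ 2 = ‖E τ‖ ^ 2 + ‖D τ‖ ^ 2)
    (hibp : ∀ (τ : W) (v : V), ⟪E τ, G v⟫ + ⟪D τ, ι v⟫ = 0)
    (N : V → Z) (f : Z)
    (hmono : ∀ w v : V, 0 ≤ ⟪N w - N v, ι (w - v)⟫)
    (u : V) (hu : ∀ v : V, ⟪G u, G v⟫ + ⟪ι u + N u, ι v⟫ = ⟪f, ι v⟫)
    (σ : W) (hσ1 : E σ = -G u) (hσ2 : D σ = f - ι u - N u) :
    ∀ (τ : W) (v : V),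
      ‖u - v‖ + ‖E σ - E τ‖ ≤
        3 * Real.sqrt (‖E τ + G v‖ ^ 2 + ‖D τ + ι v + N v - f‖ ^ 2) := by
  intro τ v
  set a := E τ + G v with ha
  set b := D τ + ι v + N v - f with hb
  have key : ‖u - v‖ ^ 2 + ⟪N u - N v, ι (u - v)⟫
      = -⟪a, G (u - v)⟫ - ⟪b, ι (u - v)⟫ := by
    have h1 := hu (u - v)
    have h2 := hibp τ (u - v)
    have h3 := hV (u - v)
    have h4 : ‖G (u - v)‖ ^ 2 = ⟪G u, G (u - v)⟫ - ⟪G v, G (u - v)⟫ := by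
      rw [← real_inner_self_eq_norm_sq, ← inner_sub_left, ← map_sub]
    have h5 : ‖ι (u - v)‖ ^ 2 = ⟪ι u, ι (u - v)⟫ - ⟪ι v, ι (u - v)⟫ := by
      rw [← real_inner_self_eq_norm_sq, ← inner_sub_left, ← map_sub]
    rw [h3, h4, h5, ha, hb]
    simp only [inner_add_left, inner_sub_left] at h1 h2 ⊢
    linarith
  have hm := hmono u v
  have y1 : 0 ≤ ‖a‖ ^ 2 + 2 * ⟪a, G (u - v)⟫ + ‖G (u - v)‖ ^ 2 := by
    rw [← norm_add_sq_real]; positivity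
  have y2 : 0 ≤ ‖b‖ ^ 2 + 2 * ⟪b, ι (u - v)⟫ + ‖ι (u - v)‖ ^ 2 := by
    rw [← norm_add_sq_real]; positivity
  have h3 := hV (u - v)
  have e1 : ‖u - v‖ ≤ Real.sqrt (‖a‖ ^ 2 + ‖b‖ ^ 2) := by
    apply Real.le_sqrt_of_sq_le
    linarith
  have e2 : ‖a‖ ≤ Real.sqrt (‖a‖ ^ 2 + ‖b‖ ^ 2) := by
    apply Real.le_sqrt_of_sq_le
    linarith [sq_nonneg ‖b‖]
  have e3 : ‖G (u - v)‖ ≤ ‖u - v‖ := by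
    refine (sq_le_sq₀ (norm_nonneg _) (norm_nonneg _)).1 ?_
    linarith [sq_nonneg ‖ι (u - v)‖]
  have e4 : E σ - E τ = -(a + G (u - v)) := by
    rw [hσ1, ha, map_sub]; abel
  have e5 := norm_add_le a (G (u - v))
  rw [e4, norm_neg]
  linarith
end

section
/- In the abstract first-order-system framework with monotone nonlinearity and exact solution pair (u, σ), let τ ∈ W and v ∈ V and suppose in addition that ‖N u − N v‖ ≤ L‖u − v‖ for some constant L ≥ 0. Then ‖u − v‖ + ‖σ − τ‖ ≤ (5 + L) η(τ, v), where ‖σ − τ‖ denotes the full W-norm (so that ‖σ − τ‖² = ‖E(σ − τ)‖² + ‖D(σ − τ)‖²). -/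
open RealInnerProductSpace

/-- full reliability bound of the nonlinear least-squares
functional estimator under a local Lipschitz bound on the nonlinearity. -/
theorem nls_full_reliability
    {V W Y Z : Type*}
    [NormedAddCommGroup V] [InnerProductSpace ℝ V] [CompleteSpace V]
    [NormedAddCommGroup W] [InnerProductSpace ℝ W] [CompleteSpace W]
    [NormedAddCommGroup Y] [InnerProductSpace ℝ Y] [CompleteSpace Y]
    [NormedAddCommGroup Z] [InnerProductSpace ℝ Z] [CompleteSpace Z]
    (G : V →L[ℝ] Y) (ι : V →L[ℝ] Z) (E : W →L[ℝ] Y) (D : W →L[ℝ] Z)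
    (hV : ∀ v : V, ‖v‖ ^ 2 = ‖G v‖ ^ 2 + ‖ι v‖ ^ 2)
    (hW : ∀ τ : W, ‖τ‖ ^ 2 = ‖E τ‖ ^ 2 + ‖D τ‖ ^ 2)
    (hibp : ∀ (τ : W) (v : V), ⟪E τ, G v⟫ + ⟪D τ, ι v⟫ = 0)
    (N : V → Z) (f : Z)
    (hmono : ∀ w v : V, 0 ≤ ⟪N w - N v, ι (w - v)⟫)
    (u : V) (hu : ∀ v : V, ⟪G u, G v⟫ + ⟪ι u + N u, ι v⟫ = ⟪f, ι v⟫)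
    (σ : W) (hσ1 : E σ = -G u) (hσ2 : D σ = f - ι u - N u)
    (L : ℝ) (hL : 0 ≤ L) :
    ∀ (τ : W) (v : V), ‖N u - N v‖ ≤ L * ‖u - v‖ →
      ‖u - v‖ + ‖σ - τ‖ ≤
        (5 + L) * Real.sqrt (‖E τ + G v‖ ^ 2 + ‖D τ + ι v + N v - f‖ ^ 2) := by
  intro τ v hN
  set S := Real.sqrt (‖E τ + G v‖ ^ 2 + ‖D τ + ι v + N v - f‖ ^ 2) with hS
  have hS0 : 0 ≤ S := Real.sqrt_nonneg _
  have hSS : S ^ 2 = ‖E τ + G v‖ ^ 2 + ‖D τ + ι v + N v - f‖ ^ 2 :=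
    Real.sq_sqrt (by positivity)
  have h1 : E (σ - τ) = -(E τ + G v) - G (u - v) := by
    rw [map_sub, map_sub, hσ1]; abel
  have h2 : D (σ - τ) = -(D τ + ι v + N v - f) - ι (u - v) - (N u - N v) := by
    rw [map_sub, map_sub, hσ2]; abel
  have hi := hibp (σ - τ) (u - v)
  have hm := hmono u v
  have hVe := hV (u - v)
  have hWs := hW (σ - τ)
  have hE : ‖E (σ - τ)‖ ≤ ‖E τ + G v‖ + ‖G (u - v)‖ := by
    rw [h1]; exact (norm_sub_le _ _).trans (by rw [norm_neg])
  have hD : ‖D (σ - τ)‖ ≤ ‖D τ + ι v + N v - f‖ + ‖ι (u - v)‖ + ‖N u - N v‖ := by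
    rw [h2]
    refine (norm_sub_le _ _).trans ?_
    gcongr
    exact (norm_sub_le _ _).trans (by rw [norm_neg])
  rw [h1, h2] at hi
  generalize E τ + G v = p at *
  generalize D τ + ι v + N v - f = q at *
  generalize N u - N v = n at *
  simp only [inner_sub_left, inner_neg_left, real_inner_self_eq_norm_sq] at hi
  have c1 := abs_le.1 (abs_real_inner_le_norm p (G (u - v)))
  have c2 := abs_le.1 (abs_real_inner_le_norm q (ι (u - v)))
  have he : ‖u - v‖ ≤ S := by
    refine (abs_le_of_sq_le_sq' ?_ hS0).2
    nlinarith [sq_nonneg (‖p‖ - ‖G (u - v)‖), sq_nonneg (‖q‖ - ‖ι (u - v)‖)]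
  have a1 : ‖p‖ ≤ S := abs_le_of_sq_le_sq' (by nlinarith [sq_nonneg ‖q‖]) hS0 |>.2
  have a2 : ‖q‖ ≤ S := abs_le_of_sq_le_sq' (by nlinarith [sq_nonneg ‖p‖]) hS0 |>.2
  have a3 : ‖G (u - v)‖ ≤ ‖u - v‖ :=
    abs_le_of_sq_le_sq' (by nlinarith [sq_nonneg ‖ι (u - v)‖]) (norm_nonneg _) |>.2
  have a4 : ‖ι (u - v)‖ ≤ ‖u - v‖ :=
    abs_le_of_sq_le_sq' (by nlinarith [sq_nonneg ‖G (u - v)‖]) (norm_nonneg _) |>.2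
  have a5 : ‖σ - τ‖ ≤ ‖E (σ - τ)‖ + ‖D (σ - τ)‖ :=
    abs_le_of_sq_le_sq' (by nlinarith [mul_nonneg (norm_nonneg (E (σ - τ))) (norm_nonneg (D (σ - τ)))])
      (by positivity) |>.2
  have a6 := mul_le_mul_of_nonneg_left he hL
  linarith
end

section
/- In the abstract first-order-system framework with monotone nonlinearity and exact solution pair (u, σ), let τ ∈ W and v ∈ V and suppose in addition that ‖N u − N v‖ ≤ L‖u − v‖ for some constant L ≥ 0. Then η(τ, v) ≤ (2 + L)(‖u − v‖ + ‖σ − τ‖), where ‖σ − τ‖ denotes the full W-norm. -/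
open RealInnerProductSpace

/-- global efficiency bound of the nonlinear least-squares
functional estimator under a local Lipschitz bound on the nonlinearity. -/
theorem nls_efficiency
    {V W Y Z : Type*}
    [NormedAddCommGroup V] [InnerProductSpace ℝ V] [CompleteSpace V]
    [NormedAddCommGroup W] [InnerProductSpace ℝ W] [CompleteSpace W]
    [NormedAddCommGroup Y] [InnerProductSpace ℝ Y] [CompleteSpace Y]
    [NormedAddCommGroup Z] [InnerProductSpace ℝ Z] [CompleteSpace Z]
    (G : V →L[ℝ] Y) (ι : V →L[ℝ] Z) (E : W →L[ℝ] Y) (D : W →L[ℝ] Z)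
    (hV : ∀ v : V, ‖v‖ ^ 2 = ‖G v‖ ^ 2 + ‖ι v‖ ^ 2)
    (hW : ∀ τ : W, ‖τ‖ ^ 2 = ‖E τ‖ ^ 2 + ‖D τ‖ ^ 2)
    (hibp : ∀ (τ : W) (v : V), ⟪E τ, G v⟫ + ⟪D τ, ι v⟫ = 0)
    (N : V → Z) (f : Z)
    (hmono : ∀ w v : V, 0 ≤ ⟪N w - N v, ι (w - v)⟫)
    (u : V) (hu : ∀ v : V, ⟪G u, G v⟫ + ⟪ι u + N u, ι v⟫ = ⟪f, ι v⟫)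
    (σ : W) (hσ1 : E σ = -G u) (hσ2 : D σ = f - ι u - N u)
    (L : ℝ) (hL : 0 ≤ L) :
    ∀ (τ : W) (v : V), ‖N u - N v‖ ≤ L * ‖u - v‖ →
      Real.sqrt (‖E τ + G v‖ ^ 2 + ‖D τ + ι v + N v - f‖ ^ 2) ≤
        (2 + L) * (‖u - v‖ + ‖σ - τ‖) := by
  intro τ v hN
  have hG : ‖G (u - v)‖ ≤ ‖u - v‖ :=
    abs_le_of_sq_le_sq' (by nlinarith [hV (u - v), sq_nonneg ‖ι (u - v)‖]) (norm_nonneg _) |>.2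
  have hi : ‖ι (u - v)‖ ≤ ‖u - v‖ :=
    abs_le_of_sq_le_sq' (by nlinarith [hV (u - v), sq_nonneg ‖G (u - v)‖]) (norm_nonneg _) |>.2
  have hE : ‖E (σ - τ)‖ ≤ ‖σ - τ‖ :=
    abs_le_of_sq_le_sq' (by nlinarith [hW (σ - τ), sq_nonneg ‖D (σ - τ)‖]) (norm_nonneg _) |>.2
  have hD : ‖D (σ - τ)‖ ≤ ‖σ - τ‖ :=
    abs_le_of_sq_le_sq' (by nlinarith [hW (σ - τ), sq_nonneg ‖E (σ - τ)‖]) (norm_nonneg _) |>.2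
  have e1 : E τ + G v = -(E (σ - τ) + G (u - v)) := by
    rw [map_sub, map_sub, hσ1]; abel
  have e2 : D τ + ι v + N v - f = -(D (σ - τ) + ι (u - v) + (N u - N v)) := by
    rw [map_sub, map_sub, hσ2]; abel
  have hd := norm_nonneg (u - v)
  have he := norm_nonneg (σ - τ)
  rw [e1, e2, norm_neg, norm_neg]
  have hA : ‖E (σ - τ) + G (u - v)‖ ≤ ‖u - v‖ + ‖σ - τ‖ := by
    linarith [norm_add_le (E (σ - τ)) (G (u - v))]
  have hB : ‖D (σ - τ) + ι (u - v) + (N u - N v)‖ ≤ (1 + L) * (‖u - v‖ + ‖σ - τ‖) := by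
    have h := norm_add₃_le (a := D (σ - τ)) (b := ι (u - v)) (c := N u - N v)
    nlinarith [mul_nonneg hL he]
  generalize ‖u - v‖ + ‖σ - τ‖ = S at *
  have hS : 0 ≤ S := (norm_nonneg _).trans hA
  apply Real.sqrt_le_iff.2
  refine ⟨by positivity, ?_⟩
  have h1 := pow_le_pow_left₀ (norm_nonneg _) hA 2
  have h2 := pow_le_pow_left₀ (norm_nonneg _) hB 2
  have h3 : 0 ≤ L * S ^ 2 := by positivity
  nlinarith [sq_nonneg S]
end

section
/- In the abstract first-order-system framework, for all ρ, τ ∈ W and w, v ∈ V, the residual r := (⟪G w, G v⟫ + ⟪ι w + N w, ι v⟫ − ⟪f, ι v⟫) + ⟪E ρ + G w, E τ⟫ + ⟪D ρ + ι w + N w − f, D τ⟫ satisfies the identity r = ⟪G w + E ρ, G v + E τ⟫ + ⟪D ρ + ι w + N w − f, ι v + D τ⟫, and consequently r ≤ √2 · η(ρ, w) · (‖τ‖² + ‖v‖²)^{1/2}. -/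
open RealInnerProductSpace

/-- identity and upper bound for the combined residual in terms of
the nonlinear least-squares functional estimator. -/
theorem nls_residual_identity_and_bound
    {V W Y Z : Type*}
    [NormedAddCommGroup V] [InnerProductSpace ℝ V] [CompleteSpace V]
    [NormedAddCommGroup W] [InnerProductSpace ℝ W] [CompleteSpace W]
    [NormedAddCommGroup Y] [InnerProductSpace ℝ Y] [CompleteSpace Y]
    [NormedAddCommGroup Z] [InnerProductSpace ℝ Z] [CompleteSpace Z]
    (G : V →L[ℝ] Y) (ι : V →L[ℝ] Z) (E : W →L[ℝ] Y) (D : W →L[ℝ] Z)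
    (hV : ∀ v : V, ‖v‖ ^ 2 = ‖G v‖ ^ 2 + ‖ι v‖ ^ 2)
    (hW : ∀ τ : W, ‖τ‖ ^ 2 = ‖E τ‖ ^ 2 + ‖D τ‖ ^ 2)
    (hibp : ∀ (τ : W) (v : V), ⟪E τ, G v⟫ + ⟪D τ, ι v⟫ = 0)
    (N : V → Z) (f : Z) :
    ∀ (ρ τ : W) (w v : V) (r : ℝ),
      r = (⟪G w, G v⟫ + ⟪ι w + N w, ι v⟫ - ⟪f, ι v⟫) + ⟪E ρ + G w, E τ⟫ +
            ⟪D ρ + ι w + N w - f, D τ⟫ →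
      r = ⟪G w + E ρ, G v + E τ⟫ + ⟪D ρ + ι w + N w - f, ι v + D τ⟫ ∧
      r ≤ Real.sqrt 2 *
            Real.sqrt (‖E ρ + G w‖ ^ 2 + ‖D ρ + ι w + N w - f‖ ^ 2) *
            Real.sqrt (‖τ‖ ^ 2 + ‖v‖ ^ 2) := by
  intro ρ τ w v r hr
  have hid : r = ⟪G w + E ρ, G v + E τ⟫ + ⟪D ρ + ι w + N w - f, ι v + D τ⟫ := by
    have h := hibp ρ v
    rw [hr]
    simp only [inner_add_left, inner_add_right, inner_sub_left]
    linarith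
  refine ⟨hid, ?_⟩
  have h1 := real_inner_le_norm (G w + E ρ) (G v + E τ)
  have h2 := real_inner_le_norm (D ρ + ι w + N w - f) (ι v + D τ)
  have h3 : ‖G v + E τ‖ ^ 2 + ‖ι v + D τ‖ ^ 2 = ‖τ‖ ^ 2 + ‖v‖ ^ 2 := by
    have h := hibp τ v
    rw [hV, hW, norm_add_sq_real, norm_add_sq_real, real_inner_comm, real_inner_comm (D τ)]
    linarith
  rw [add_comm (G w) (E ρ)] at h1 hid
  rw [← h3]
  generalize ‖E ρ + G w‖ = a at *
  generalize ‖D ρ + ι w + N w - f‖ = b at *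
  generalize ‖G v + E τ‖ = c at *
  generalize ‖ι v + D τ‖ = d at *
  have h4 : a * c + b * d ≤ Real.sqrt (a ^ 2 + b ^ 2) * Real.sqrt (c ^ 2 + d ^ 2) := by
    rw [← Real.sqrt_mul (by positivity)]
    apply Real.le_sqrt_of_sq_le
    nlinarith [sq_nonneg (a * d - b * c)]
  have h5 : (1 : ℝ) ≤ Real.sqrt 2 := Real.one_le_sqrt.mpr (by norm_num)
  have h6 : 0 ≤ Real.sqrt (a ^ 2 + b ^ 2) * Real.sqrt (c ^ 2 + d ^ 2) := by positivity
  rw [mul_assoc]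
  have h7 := le_mul_of_one_le_left h6 h5
  linarith
end

section
/- In the abstract monotone Galerkin framework, let f ∈ H, let (V_ℓ)_{ℓ ∈ ℕ} be a sequence of closed subspaces of H with V_ℓ ⊆ V_{ℓ+1} for all ℓ, and let V_∞ be the topological closure of ⋃_ℓ V_ℓ. Suppose that for each ℓ, u_ℓ ∈ V_ℓ satisfies a u_ℓ v = ⟪f, v⟫ for all v ∈ V_ℓ, and that u_∞ ∈ V_∞ satisfies a u_∞ v = ⟪f, v⟫ for all v ∈ V_∞. Then ‖u_∞ − u_ℓ‖ → 0 as ℓ → ∞. -/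
open RealInnerProductSpace

/-- convergence of Galerkin solutions on nested subspaces to the
Galerkin solution on the closure of their union, in the abstract monotone
framework. -/
theorem monotone_galerkin_limit_convergence
    {H : Type*} [NormedAddCommGroup H] [InnerProductSpace ℝ H] [CompleteSpace H]
    (a : H → H →L[ℝ] ℝ) (L₀ : ℝ) (hL₀ : 0 < L₀)
    (hmono : ∀ w v : H, ‖w - v‖ ^ 2 ≤ a w (w - v) - a v (w - v))
    (hlip : ∀ z w v : H,
      |a z v - a w v| ≤ L₀ * (1 + ‖z‖ ^ 2 + ‖w‖ ^ 2) * ‖z - w‖ * ‖v‖)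
    (hzero : ∀ v : H, a 0 v = 0)
    (f : H) (V : ℕ → Submodule ℝ H)
    (hclosed : ∀ ℓ, IsClosed ((V ℓ : Set H)))
    (hnested : ∀ ℓ, V ℓ ≤ V (ℓ + 1))
    (Vinf : Submodule ℝ H)
    (hVinf : (Vinf : Set H) = closure (⋃ ℓ, (V ℓ : Set H)))
    (u : ℕ → H) (hu : ∀ ℓ, u ℓ ∈ V ℓ)
    (hu' : ∀ ℓ, ∀ v ∈ V ℓ, a (u ℓ) v = ⟪f, v⟫)
    (uinf : H) (huinf : uinf ∈ Vinf)
    (huinf' : ∀ v ∈ Vinf, a uinf v = ⟪f, v⟫) :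
    Filter.Tendsto (fun ℓ => ‖uinf - u ℓ‖) Filter.atTop (nhds 0) := by
  have hmon : Monotone V := monotone_nat_of_le_succ hnested
  have hsub : ∀ ℓ, ∀ v ∈ V ℓ, v ∈ Vinf := by
    intro ℓ v hv
    have : v ∈ (Vinf : Set H) := by
      rw [hVinf]
      exact subset_closure (Set.mem_iUnion.2 ⟨ℓ, hv⟩)
    exact this
  have hbound : ∀ w : H, a w w = ⟪f, w⟫ → ‖w‖ ≤ ‖f‖ := by
    intro w hw
    have h1 := hmono w 0
    rw [hzero, sub_zero, sub_zero, hw] at h1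
    have h2 := real_inner_le_norm f w
    by_contra hlt
    push Not at hlt
    nlinarith [norm_nonneg f, norm_nonneg w]
  have hbi := hbound uinf (huinf' _ huinf)
  set C := L₀ * (1 + ‖f‖ ^ 2 + ‖f‖ ^ 2) with hC
  have hCpos : 0 < C := by positivity
  have key : ∀ ℓ, ∀ v ∈ V ℓ, ‖uinf - u ℓ‖ ≤ C * ‖uinf - v‖ := by
    intro ℓ v hv
    have hbl := hbound (u ℓ) (hu' ℓ _ (hu ℓ))
    have hd : v - u ℓ ∈ V ℓ := (V ℓ).sub_mem hv (hu ℓ)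
    have h1 := hmono uinf (u ℓ)
    have h0 : a uinf (v - u ℓ) = a (u ℓ) (v - u ℓ) := by
      rw [huinf' _ (hsub ℓ _ hd), hu' ℓ _ hd]
    have e : uinf - u ℓ = (uinf - v) + (v - u ℓ) := by abel
    have h2 : a uinf (uinf - u ℓ) - a (u ℓ) (uinf - u ℓ)
        = a uinf (uinf - v) - a (u ℓ) (uinf - v) := by
      rw [e, map_add, map_add, h0]; ring
    have h3 := (le_abs_self _).trans (hlip uinf (u ℓ) (uinf - v))
    have h4 : L₀ * (1 + ‖uinf‖ ^ 2 + ‖u ℓ‖ ^ 2) * ‖uinf - u ℓ‖ * ‖uinf - v‖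
        ≤ C * ‖uinf - u ℓ‖ * ‖uinf - v‖ := by
      rw [hC]; gcongr
    have h5 : ‖uinf - u ℓ‖ ^ 2 ≤ C * ‖uinf - u ℓ‖ * ‖uinf - v‖ := by linarith
    rcases (norm_nonneg (uinf - u ℓ)).eq_or_lt with h | h
    · rw [← h]; positivity
    · refine le_of_mul_le_mul_left ?_ h
      linarith
  rw [Metric.tendsto_atTop]
  intro ε hε
  have hmem : uinf ∈ closure (⋃ ℓ, (V ℓ : Set H)) := by
    rw [← hVinf]; exact huinf
  obtain ⟨v, hv, hdist⟩ := Metric.mem_closure_iff.1 hmem (ε / C) (by positivity)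
  obtain ⟨N, hN⟩ := Set.mem_iUnion.1 hv
  refine ⟨N, fun n hn => ?_⟩
  rw [Real.dist_eq, sub_zero, abs_norm]
  refine (key n v (hmon hn hN)).trans_lt ?_
  rw [dist_eq_norm, lt_div_iff₀ hCpos] at hdist
  linarith
end

section
/- Let W be a real Hilbert space, (W_ℓ)_{ℓ ∈ ℕ} a sequence of closed subspaces of W with W_ℓ ⊆ W_{ℓ+1} for all ℓ, and W_∞ the topological closure of ⋃_ℓ W_ℓ. Let G_∞ and G_ℓ (ℓ ∈ ℕ) be continuous linear functionals on W such that ‖G_ℓ − G_∞‖ → 0 in the operator norm. Suppose that for each ℓ, σ_ℓ ∈ W_ℓ satisfies ⟪σ_ℓ, τ⟫ = G_ℓ τ for all τ ∈ W_ℓ, and that σ_∞ ∈ W_∞ satisfies ⟪σ_∞, τ⟫ = G_∞ τ for all τ ∈ W_∞. Then ‖σ_∞ − σ_ℓ‖ → 0 as ℓ → ∞. -/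
open RealInnerProductSpace

/-- convergence of Riesz-type solutions on nested subspaces to the
solution on the closure of their union, for convergent right-hand sides. -/
theorem recovered_flux_limit_convergence
    {W : Type*} [NormedAddCommGroup W] [InnerProductSpace ℝ W] [CompleteSpace W]
    (Wsub : ℕ → Submodule ℝ W)
    (hclosed : ∀ ℓ, IsClosed ((Wsub ℓ : Set W)))
    (hnested : ∀ ℓ, Wsub ℓ ≤ Wsub (ℓ + 1))
    (Winf : Submodule ℝ W)
    (hWinf : (Winf : Set W) = closure (⋃ ℓ, (Wsub ℓ : Set W)))
    (Ginf : W →L[ℝ] ℝ) (Gl : ℕ → W →L[ℝ] ℝ)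
    (hG : Filter.Tendsto (fun ℓ => ‖Gl ℓ - Ginf‖) Filter.atTop (nhds 0))
    (σl : ℕ → W) (hσl : ∀ ℓ, σl ℓ ∈ Wsub ℓ)
    (hσl' : ∀ ℓ, ∀ τ ∈ Wsub ℓ, ⟪σl ℓ, τ⟫ = Gl ℓ τ)
    (σinf : W) (hσinf : σinf ∈ Winf)
    (hσinf' : ∀ τ ∈ Winf, ⟪σinf, τ⟫ = Ginf τ) :
    Filter.Tendsto (fun ℓ => ‖σinf - σl ℓ‖) Filter.atTop (nhds 0) := by
  have hmono : Monotone Wsub := monotone_nat_of_le_succ hnested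
  rw [Metric.tendsto_atTop] at hG ⊢
  intro ε hε
  have hmem : σinf ∈ closure (⋃ ℓ, (Wsub ℓ : Set W)) := by
    rw [← hWinf]; exact hσinf
  obtain ⟨w, hw, hd⟩ := Metric.mem_closure_iff.mp hmem (ε / 3) (by positivity)
  obtain ⟨N, hN⟩ := Set.mem_iUnion.mp hw
  obtain ⟨M, hM⟩ := hG (ε / 3) (by positivity)
  refine ⟨max N M, fun l hl => ?_⟩
  have h1 := hM l (le_trans (le_max_right _ _) hl)
  have hwl : w ∈ Wsub l := hmono (le_trans (le_max_left _ _) hl) hN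
  simp only [dist_zero_right, norm_norm] at h1 ⊢
  rw [dist_eq_norm] at hd
  have he : σl l - w ∈ Wsub l := (Wsub l).sub_mem (hσl l) hwl
  have heinf : σl l - w ∈ Winf := by
    have : σl l - w ∈ (Winf : Set W) := by
      rw [hWinf]
      exact subset_closure (Set.mem_iUnion.mpr ⟨l, he⟩)
    exact this
  have e1 := hσl' l _ he
  have e2 := hσinf' _ heinf
  have e3 : ‖σl l - w‖ * ‖σl l - w‖
      = (Gl l - Ginf) (σl l - w) + ⟪σinf - w, σl l - w⟫ := by
    rw [← real_inner_self_eq_norm_mul_norm, inner_sub_left (σl l) w (σl l - w),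
      inner_sub_left σinf w (σl l - w), e1, e2, ContinuousLinearMap.sub_apply]
    ring
  have b1 : (Gl l - Ginf) (σl l - w) ≤ ‖Gl l - Ginf‖ * ‖σl l - w‖ :=
    le_trans (le_abs_self _) ((Gl l - Ginf).le_opNorm _)
  have b2 := real_inner_le_norm (σinf - w) (σl l - w)
  have b3 : ‖σl l - w‖ ≤ ‖Gl l - Ginf‖ + ‖σinf - w‖ := by
    by_contra! hc
    have hp : 0 < ‖σl l - w‖ := lt_of_le_of_lt (by positivity) hc
    have := mul_lt_mul_of_pos_right hc hp
    linarith
  have b4 : ‖σinf - σl l‖ ≤ ‖σinf - w‖ + ‖σl l - w‖ := by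
    have := norm_sub_le (σinf - w) (σl l - w)
    rwa [sub_sub_sub_cancel_right] at this
  linarith
end

section
/- In the abstract first-order-system framework with monotone nonlinearity and exact solution pair (u, σ), suppose (σ_∞, u_∞) ∈ W × V satisfies: ⟪G u_∞, G v⟫ + ⟪ι u_∞ + N u_∞, ι v⟫ = ⟪f, ι v⟫ for all v ∈ V, and ⟪E σ_∞ + G u_∞, E τ⟫ + ⟪D σ_∞ + ι u_∞ + N u_∞ − f, D τ⟫ = 0 for all τ ∈ W (i.e. the combined residual of (σ_∞, u_∞) vanishes on all of W × V). Then u_∞ = u and σ_∞ = σ. -/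
open RealInnerProductSpace

/-- vanishing of the limiting combined residual on the whole space
forces identification with the exact solution pair. -/
theorem nls_limit_identification
    {V W Y Z : Type*}
    [NormedAddCommGroup V] [InnerProductSpace ℝ V] [CompleteSpace V]
    [NormedAddCommGroup W] [InnerProductSpace ℝ W] [CompleteSpace W]
    [NormedAddCommGroup Y] [InnerProductSpace ℝ Y] [CompleteSpace Y]
    [NormedAddCommGroup Z] [InnerProductSpace ℝ Z] [CompleteSpace Z]
    (G : V →L[ℝ] Y) (ι : V →L[ℝ] Z) (E : W →L[ℝ] Y) (D : W →L[ℝ] Z)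
    (hV : ∀ v : V, ‖v‖ ^ 2 = ‖G v‖ ^ 2 + ‖ι v‖ ^ 2)
    (hW : ∀ τ : W, ‖τ‖ ^ 2 = ‖E τ‖ ^ 2 + ‖D τ‖ ^ 2)
    (hibp : ∀ (τ : W) (v : V), ⟪E τ, G v⟫ + ⟪D τ, ι v⟫ = 0)
    (N : V → Z) (f : Z)
    (hmono : ∀ w v : V, 0 ≤ ⟪N w - N v, ι (w - v)⟫)
    (u : V) (hu : ∀ v : V, ⟪G u, G v⟫ + ⟪ι u + N u, ι v⟫ = ⟪f, ι v⟫)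
    (σ : W) (hσ1 : E σ = -G u) (hσ2 : D σ = f - ι u - N u)
    (σinf : W) (uinf : V)
    (h1 : ∀ v : V, ⟪G uinf, G v⟫ + ⟪ι uinf + N uinf, ι v⟫ = ⟪f, ι v⟫)
    (h2 : ∀ τ : W,
      ⟪E σinf + G uinf, E τ⟫ + ⟪D σinf + ι uinf + N uinf - f, D τ⟫ = 0) :
    uinf = u ∧ σinf = σ := by
  have hu0 : uinf = u := by
    have a := hu (uinf - u)
    have b := h1 (uinf - u)
    have m := hmono uinf u
    have n := hV (uinf - u)
    have c : ⟪G (uinf - u), G (uinf - u)⟫ + ⟪ι (uinf - u), ι (uinf - u)⟫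
        + ⟪N uinf - N u, ι (uinf - u)⟫ = 0 := by
      have e1 : ⟪G (uinf - u), G (uinf - u)⟫
          = ⟪G uinf, G (uinf - u)⟫ - ⟪G u, G (uinf - u)⟫ := by
        rw [← inner_sub_left, ← map_sub]
      have e2 : ⟪ι (uinf - u), ι (uinf - u)⟫
          = ⟪ι uinf, ι (uinf - u)⟫ - ⟪ι u, ι (uinf - u)⟫ := by
        rw [← inner_sub_left, ← map_sub]
      rw [inner_add_left] at a b
      rw [e1, e2, inner_sub_left]
      linarith
    rw [real_inner_self_eq_norm_sq, real_inner_self_eq_norm_sq] at c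
    have h0 : ‖uinf - u‖ = 0 := by
      have : ‖uinf - u‖ ^ 2 = 0 := le_antisymm (by linarith) (sq_nonneg _)
      exact pow_eq_zero_iff (two_ne_zero) |>.1 this
    exact sub_eq_zero.1 (norm_eq_zero.1 h0)
  subst hu0
  refine ⟨rfl, ?_⟩
  have a := h2 (σinf - σ)
  have e1 : E σinf + G uinf = E (σinf - σ) := by
    rw [map_sub, hσ1]; abel
  have e2 : D σinf + ι uinf + N uinf - f = D (σinf - σ) := by
    rw [map_sub, hσ2]; abel
  rw [e1, e2, real_inner_self_eq_norm_sq, real_inner_self_eq_norm_sq, ← hW] at a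
  exact sub_eq_zero.1 (norm_eq_zero.1 (pow_eq_zero_iff (two_ne_zero) |>.1 a))
end
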